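/- arXiv:math/0504245 — 2 statements merged into one kernel-verified Lean document; each statement's English description precedes it below -/
import Mathlib

section
/- Let f be a meromorphic function on ℂ such that f(0) ≠ 0, ∞, and let c ∈ ℂ. Then for all α > 1, all δ with 0 < δ < 1, and all r ≥ 1, one has m(r, f(z+c)/f(z)) ≤ [ (8|c|(3α+1) + 8α(α−1)|c|^δ) / (δ(1−δ)(α−1)² r^δ) ] · ( T(α(r+|c|), f) + log⁺(1/|f(0)|) ). -/
open MeasureTheory Filter Topology Metric

noncomputable section

/-- Positive part of the logarithm: `log⁺ x = max (log x) 0`. -/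
def logPlus (x : ℝ) : ℝ := max (Real.log x) 0

/-- The point `r e^{iθ}` on the circle of radius `r`. -/
def circ (r θ : ℝ) : ℂ := (r : ℂ) * Complex.exp (θ * Complex.I)

/-- Nevanlinna proximity function `m(r, f)`. -/
def nevm (f : ℂ → ℂ) (r : ℝ) : ℝ :=
  (2 * Real.pi)⁻¹ * ∫ θ in (0:ℝ)..(2 * Real.pi), logPlus ‖f (circ r θ)‖

/-- Order of the pole of `f` at `x` (`0` if `f` extends analytically over `x`);
determined through the punctured neighbourhood of `x`. -/
def poleOrd (f : ℂ → ℂ) (x : ℂ) : ℕ :=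
  sInf {n : ℕ | ∃ g : ℂ → ℂ, AnalyticAt ℂ g x ∧
    ∀ᶠ w in 𝓝[≠] x, (w - x) ^ n * f w = g w}

/-- Unintegrated counting function `n(r, f)`: number of poles of `f` in `|z| ≤ r`,
counted with multiplicity. -/
def nevn (f : ℂ → ℂ) (r : ℝ) : ℕ := ∑ᶠ z ∈ closedBall (0:ℂ) r, poleOrd f z

/-- Integrated counting function `N(r, f)`. -/
def nevN (f : ℂ → ℂ) (r : ℝ) : ℝ :=
  (∫ t in (0:ℝ)..r, ((nevn f t : ℝ) - (nevn f 0 : ℝ)) / t) + (nevn f 0 : ℝ) * Real.log r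

/-- Nevanlinna characteristic `T(r, f) = m(r, f) + N(r, f)`. -/
def nevT (f : ℂ → ℂ) (r : ℝ) : ℝ := nevm f r + nevN f r

/-- A subset of `(0, ∞)` has finite logarithmic measure: `∫_E dr/r < ∞`. -/
def FinLogMeasure (E : Set ℝ) : Prop :=
  E ⊆ Set.Ioi 0 ∧ ∫⁻ r in E, ENNReal.ofReal r⁻¹ < ⊤

/-- `f` is a non-constant function. -/
def Nonconstant (f : ℂ → ℂ) : Prop := ¬ ∃ a : ℂ, ∀ z : ℂ, f z = a

/-- `f` has finite order: `limsup_{r→∞} log T(r,f) / log r < ∞`. -/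
def FiniteOrder (f : ℂ → ℂ) : Prop :=
  IsBoundedUnder (· ≤ ·) atTop fun r : ℝ => Real.log (nevT f r) / Real.log r

end

theorem aux_poleOrd (f : ℂ → ℂ) (x : ℂ) (hf : MeromorphicAt f x) (ht : meromorphicOrderAt f x ≠ ⊤) :
    (poleOrd f x : ℤ) = (meromorphicOrderAt f x).untop₀⁻ := by
  have key : {n : ℕ | ∃ g : ℂ → ℂ, AnalyticAt ℂ g x ∧
      ∀ᶠ w in 𝓝[≠] x, (w - x) ^ n * f w = g w} =
      {n : ℕ | 0 ≤ (n : ℤ) + (meromorphicOrderAt f x).untop₀} := by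
    ext n
    simp only [Set.mem_ofPred_eq]
    have hm : MeromorphicAt (fun w => (w - x) ^ n) x := by fun_prop
    have ho : meromorphicOrderAt (fun w => (w - x) ^ n * f w) x =
        (((n : ℤ) + (meromorphicOrderAt f x).untop₀ : ℤ) : WithTop ℤ) := by
      have h1 : meromorphicOrderAt (fun w => (w - x) ^ n) x = ((n : ℤ) : WithTop ℤ) := by
        rw [meromorphicOrderAt_eq_int_iff hm]
        exact ⟨fun _ => 1, analyticAt_const, one_ne_zero, by simp⟩
      have := meromorphicOrderAt_mul hm hf
      rw [show (fun w => (w - x) ^ n * f w) = (fun w => (w - x) ^ n) * f from rfl, this, h1]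
      conv_lhs => rw [← WithTop.coe_untop₀_of_ne_top ht]
      norm_cast
    constructor
    · rintro ⟨g, hg, he⟩
      have h2 : meromorphicOrderAt (fun w => (w - x) ^ n * f w) x = meromorphicOrderAt g x :=
        meromorphicOrderAt_congr he
      have h3 := hg.meromorphicOrderAt_nonneg
      rw [← h2, ho] at h3
      exact_mod_cast h3
    · intro h
      have hmm : MeromorphicAt (fun w => (w - x) ^ n * f w) x := hm.mul hf
      refine ⟨toMeromorphicNFAt (fun w => (w - x) ^ n * f w) x, ?_, hmm.eq_nhdsNE_toMeromorphicNFAt⟩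
      apply (meromorphicNFAt_toMeromorphicNFAt).meromorphicOrderAt_nonneg_iff_analyticAt.1
      rw [← meromorphicOrderAt_congr hmm.eq_nhdsNE_toMeromorphicNFAt, ho]
      exact_mod_cast h
  unfold poleOrd
  rw [key]
  set m := (meromorphicOrderAt f x).untop₀
  have : sInf {n : ℕ | 0 ≤ (n : ℤ) + m} = (m⁻).toNat := by
    apply le_antisymm
    · apply Nat.sInf_le
      simp only [Set.mem_ofPred_eq]
      rw [Int.toNat_of_nonneg (negPart_nonneg m)]
      rw [negPart_def]
      have := le_sup_left (a := -m) (b := 0)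
      linarith
    · apply le_csInf
      · exact ⟨(m⁻).toNat, by
          simp only [Set.mem_ofPred_eq]
          rw [Int.toNat_of_nonneg (negPart_nonneg m)]
          rw [negPart_def]
          have := le_sup_left (a := -m) (b := 0)
          linarith⟩
      · intro n hn
        simp only [Set.mem_ofPred_eq] at hn
        rw [negPart_def]
        simp only [Int.toNat_le, sup_le_iff]
        constructor <;> linarith
  rw [this, Int.toNat_of_nonneg (negPart_nonneg m)]

theorem aux_nevm (f : ℂ → ℂ) (r : ℝ) : nevm f r = Real.circleAverage (fun z => Real.posLog ‖f z‖) 0 r := by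
  unfold nevm Real.circleAverage
  simp only [smul_eq_mul, circleMap, zero_add, circ, logPlus, Real.posLog_def, max_comm]
  rfl

open ValueDistribution in
theorem aux_int (R a : ℝ) (ha : 0 < a) (haR : a ≤ R) :
    IntervalIntegrable (fun t : ℝ => (if a ≤ t then (1:ℝ) else 0) / t) volume 0 R ∧
    ∫ t in (0:ℝ)..R, (if a ≤ t then (1:ℝ) else 0) / t = Real.log (R / a) := by
  have hR : 0 < R := by linarith
  have e1 : ∀ᵐ t : ℝ, t ∈ Set.uIoc 0 a → (0:ℝ) = (if a ≤ t then (1:ℝ) else 0) / t := by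
    have : ∀ᵐ t : ℝ, t ≠ a := by simp [ae_iff]
    filter_upwards [this] with t ht hmem
    rw [Set.uIoc_of_le ha.le] at hmem
    rw [if_neg (by intro h; exact ht (le_antisymm hmem.2 h)), zero_div]
  have e2 : ∀ t ∈ Set.uIcc a R, t⁻¹ = (if a ≤ t then (1:ℝ) else 0) / t := by
    intro t ht
    rw [Set.uIcc_of_le haR] at ht
    rw [if_pos ht.1, one_div]
  have i1 : IntervalIntegrable (fun t : ℝ => (if a ≤ t then (1:ℝ) else 0) / t) volume 0 a := by
    apply (intervalIntegrable_const (c := (0:ℝ))).congr_ae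
    rw [Filter.EventuallyEq, ae_restrict_iff' measurableSet_uIoc]
    exact e1
  have i2 : IntervalIntegrable (fun t : ℝ => (if a ≤ t then (1:ℝ) else 0) / t) volume a R := by
    have : IntervalIntegrable (fun t : ℝ => t⁻¹) volume a R := by
      apply intervalIntegral.intervalIntegrable_inv (fun t ht => ?_) continuousOn_id
      rw [Set.uIcc_of_le haR] at ht
      simp; linarith [ht.1]
    apply this.congr
    intro t ht
    exact e2 t (Set.uIoc_subset_uIcc ht)
  refine ⟨i1.trans i2, ?_⟩
  rw [← intervalIntegral.integral_add_adjacent_intervals i1 i2,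
    ← intervalIntegral.integral_congr_ae e1, ← intervalIntegral.integral_congr e2,
    integral_inv_of_pos ha hR]
  simp

open ValueDistribution MeromorphicOn in
theorem aux_nevN (f : ℂ → ℂ) (hf : Meromorphic f) (ht : ∀ z, meromorphicOrderAt f z ≠ ⊤)
    (h0 : meromorphicOrderAt f 0 = 0) (R : ℝ) (hR : 0 < R) :
    nevN f R = logCounting f ⊤ R := by
  set D := (MeromorphicOn.divisor f Set.univ)⁻ with hD
  have hp : ∀ z, (poleOrd f z : ℤ) = D z := by
    intro z
    rw [aux_poleOrd f z (hf z) (ht z), hD, Function.locallyFinsuppWithin.negPart_apply,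
      divisor_apply hf.meromorphicOn (Set.mem_univ z)]
  have hp' : ∀ z, (poleOrd f z : ℝ) = (D z : ℝ) := by intro z; exact_mod_cast hp z
  have hD0 : D 0 = 0 := by
    rw [← hp, aux_poleOrd f 0 (hf 0) (ht 0), h0]; simp
  have hp0 : poleOrd f 0 = 0 := by exact_mod_cast (hp 0).trans hD0
  have hn0 : nevn f 0 = 0 := by simp [nevn, hp0]
  have hfin : ((D.toClosedBall R).support).Finite :=
    (D.toClosedBall R).finiteSupport (isCompact_closedBall 0 |R|)
  have hin : ∀ z ∈ closedBall (0:ℂ) R, D.toClosedBall R z = D z := fun z hz =>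
    Function.locallyFinsuppWithin.toClosedBall_eval_within D (by rwa [abs_of_pos hR])
  set S := hfin.toFinset with hS
  have hSb : ∀ z ∈ S, 0 < ‖z‖ ∧ ‖z‖ ≤ R := by
    intro z hz
    have hz' : D.toClosedBall R z ≠ 0 := by simpa [hS] using hz
    have h1 : z ∈ closedBall (0:ℂ) R := by
      have := Function.locallyFinsuppWithin.toClosedBall_support_subset_closedBall (r := R) D hz'
      rwa [abs_of_pos hR] at this
    refine ⟨norm_pos_iff.2 ?_, by simpa using h1⟩
    rintro rfl
    exact hz' (by rw [hin 0 h1, hD0])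
  have hn : ∀ t ∈ Set.uIcc 0 R, ((nevn f t : ℝ) - (nevn f 0 : ℝ)) / t =
      ∑ z ∈ S, (D z : ℝ) * ((if ‖z‖ ≤ t then (1:ℝ) else 0) / t) := by
    intro t ht
    rw [Set.uIcc_of_le hR.le] at ht
    have : nevn f t = ∑ z ∈ S, if ‖z‖ ≤ t then poleOrd f z else 0 := by
      unfold nevn
      have e : (fun z => ∑ᶠ (_ : z ∈ closedBall (0:ℂ) t), poleOrd f z) =
          fun z => if ‖z‖ ≤ t then poleOrd f z else 0 := by
        ext z
        classical
        rw [finsum_eq_if]; simp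
      rw [e]
      apply finsum_eq_sum_of_support_subset
      intro z hz
      simp only [Function.mem_support, ne_eq, ite_eq_right_iff, Classical.not_imp] at hz
      simp only [hS, Set.Finite.coe_toFinset, Function.mem_support]
      rw [hin z (by simpa using hz.1.trans ht.2), ← hp]
      exact_mod_cast hz.2
    rw [hn0, this]
    push_cast
    rw [sub_zero, Finset.sum_div]
    apply Finset.sum_congr rfl
    intro z hz
    rw [hp']
    split_ifs <;> ring
  unfold nevN
  rw [intervalIntegral.integral_congr hn, hn0, intervalIntegral.integral_finsetSum]
  · rw [logCounting_top, ← hD]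
    simp only [Function.locallyFinsuppWithin.logCounting, AddMonoidHom.coe_mk, ZeroHom.coe_mk, hD0]
    simp only [Nat.cast_zero, zero_mul, add_zero, Int.cast_zero]
    rw [finsum_eq_sum_of_support_subset (s := S)]
    · apply Finset.sum_congr rfl
      intro z hz
      obtain ⟨h1, h2⟩ := hSb z hz
      rw [intervalIntegral.integral_const_mul, (aux_int R ‖z‖ h1 h2).2, hin z (by simpa using h2),
        div_eq_mul_inv]
    · intro z hz
      simp only [Function.mem_support, ne_eq, mul_eq_zero, not_or, Int.cast_eq_zero] at hz
      simpa [hS] using hz.1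
  · intro z hz
    obtain ⟨h1, h2⟩ := hSb z hz
    exact (aux_int R ‖z‖ h1 h2).1.const_mul _

open ValueDistribution MeromorphicOn in
theorem aux_nevT (f : ℂ → ℂ) (hf : Meromorphic f) (ht : ∀ z, meromorphicOrderAt f z ≠ ⊤)
    (h0 : meromorphicOrderAt f 0 = 0) (R : ℝ) (hR : 0 < R) :
    nevT f R = characteristic f ⊤ R := by
  rw [nevT, characteristic, Pi.add_apply, aux_nevN f hf ht h0 R hR, aux_nevm, proximity_top]

section
open MeromorphicOn Complex Real

theorem aux_kernelInt (f : ℂ → ℂ) (hf : Meromorphic f) (s : ℝ) (w : ℂ) (hw : w ∈ ball (0:ℂ) s) :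
    CircleIntegrable ((Complex.re ∘ herglotzRieszKernel 0 w) * (fun z => Real.log ‖f z‖)) 0 s := by
  have h1 : CircleIntegrable (fun z => Real.log ‖f z‖) 0 s :=
    (hf.meromorphicOn).circleIntegrable_log_norm
  have hs : 0 < s := pos_of_mem_ball hw
  exact h1.continuousOn_smul (Complex.continuous_re.comp_continuousOn
    (by simpa [abs_of_pos hs] using continuousOn_herglotzRieszKernel_sphere hw))

theorem aux_PJ (f : ℂ → ℂ) (hf : Meromorphic f) (ht : ∀ z, meromorphicOrderAt f z ≠ ⊤)
    (s : ℝ) (w : ℂ) (hw : w ∈ ball (0:ℂ) s) (ha : AnalyticAt ℂ f w) (hne : f w ≠ 0) :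
    circleAverage ((Complex.re ∘ herglotzRieszKernel 0 w) * (fun z => Real.log ‖f z‖)) 0 s
     = (∑ᶠ i, (divisor f (ball 0 s) i) * Real.log ‖canonicalFactor s i w‖) + Real.log ‖f w‖ := by
  have hs : 0 < s := pos_of_mem_ball hw
  obtain ⟨h, D⟩ := (hf.meromorphicOn (s := closedBall 0 s)).exists_ecanonicalDecomp (fun u => ht u)
  have hord : meromorphicOrderAt f w = 0 := by
    rw [ha.meromorphicNFAt.meromorphicOrderAt_eq_zero_iff]; exact hne
  have h1 := D.log_norm_eq (ball_subset_closedBall hw) hord hs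
  rw [ha.meromorphicTrailingCoeffAt_of_ne_zero hne] at h1
  have hhar : InnerProductSpace.HarmonicOnNhd (fun z => Real.log ‖h z‖) (closedBall 0 s) :=
    fun x hx ↦ (D.analyticOnNhd x hx).harmonicAt_log_norm (D.ne_zero x hx)
  have h2 := hhar.circleAverage_re_herglotzRieszKernel_smul hw
  have hfinS : (divisor f (sphere 0 s)).support.Finite :=
    (divisor f (sphere 0 s)).finiteSupport (isCompact_sphere 0 s)
  set S := hfinS.toFinset with hS
  have hSs : ∀ v ∈ S, v ∈ sphere (0:ℂ) s := by
    intro v hv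
    have : divisor f (sphere 0 s) v ≠ 0 := by simpa [hS] using hv
    by_contra hcon
    exact this (Function.locallyFinsuppWithin.apply_eq_zero_of_notMem _ hcon)
  set P : ℂ → ℝ := Complex.re ∘ herglotzRieszKernel 0 w with hP
  have hcong : (fun z => Real.log ‖f z‖) =ᶠ[codiscreteWithin (sphere (0:ℂ) s)]
      fun z => Real.log ‖h z‖ + ∑ v ∈ S, (divisor f (sphere 0 s) v : ℝ) * Real.log ‖z - v‖ := by
    have hG : (closedBall 0 s) ∩ {z | meromorphicOrderAt f z = 0 ∧ AnalyticAt ℂ f z ∧ f z ≠ 0} ∈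
        codiscreteWithin (closedBall (0:ℂ) s) := by
      have hm : MeromorphicOn f (closedBall 0 s) := fun x _ => hf x
      filter_upwards [hm.analyticAt_mem_codiscreteWithin,
        MeromorphicAt.MeromorphicOn.codiscreteWithin_setOfPred_ne_zero hm (fun u _ => ht u),
        self_mem_codiscreteWithin (closedBall (0:ℂ) s)] with z hz1 hz2 hz3
      have hz1' : AnalyticAt ℂ f z := hz1
      have hz2' : f z ≠ 0 := hz2
      exact ⟨hz3, by rw [hz1'.meromorphicNFAt.meromorphicOrderAt_eq_zero_iff]; exact hz2', hz1', hz2'⟩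
    filter_upwards [codiscreteWithin_mono sphere_subset_closedBall hG,
      self_mem_codiscreteWithin (sphere (0:ℂ) s)] with z hz hz2
    obtain ⟨hz1, hzo, hza, hzne⟩ := hz
    have := D.log_norm_eq hz1 hzo hs
    rw [hza.meromorphicTrailingCoeffAt_of_ne_zero hzne] at this
    have e0 : (∑ᶠ i, (divisor f (ball 0 s) i : ℝ) * Real.log ‖canonicalFactor s i z‖) = 0 := by
      apply finsum_eq_zero_of_forall_eq_zero
      intro i
      by_cases hi : i ∈ ball (0:ℂ) s
      · rw [norm_canonicalFactor_eval_circle_eq_one hi hz2]; simp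
      · rw [Function.locallyFinsuppWithin.apply_eq_zero_of_notMem _ hi]; simp
    have e1 : (∑ᶠ i, (divisor f (sphere 0 s) i : ℝ) * Real.log ‖z - i‖) =
        ∑ v ∈ S, (divisor f (sphere 0 s) v : ℝ) * Real.log ‖z - v‖ := by
      apply finsum_eq_sum_of_support_subset
      intro v hv
      simp only [Function.mem_support, ne_eq, mul_eq_zero, not_or, Int.cast_eq_zero] at hv
      simpa [hS] using hv.1
    rw [e0, e1] at this
    linarith
  have hcong2 : (P * fun z => Real.log ‖f z‖) =ᶠ[codiscreteWithin (sphere (0:ℂ) |s|)]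
      (P * fun z => Real.log ‖h z‖) + ∑ v ∈ S, fun z => (divisor f (sphere 0 s) v : ℝ) *
        (P * fun z => Real.log ‖z - v‖) z := by
    rw [abs_of_pos hs]
    filter_upwards [hcong] with z hz
    simp only [Pi.mul_apply, Pi.add_apply, Finset.sum_apply, hz, mul_add, Finset.mul_sum]
    congr 1
    apply Finset.sum_congr rfl
    intros; ring
  have hPc : ContinuousOn P (sphere 0 |s|) := Complex.continuous_re.comp_continuousOn
    (by simpa [abs_of_pos hs] using continuousOn_herglotzRieszKernel_sphere hw)
  have i1 : CircleIntegrable (P * fun z => Real.log ‖h z‖) 0 s := by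
    apply CircleIntegrable.continuousOn_smul _ hPc
    apply MeromorphicOn.circleIntegrable_log_norm
    rw [abs_of_pos hs]
    exact (D.analyticOnNhd.mono sphere_subset_closedBall).meromorphicOn
  have i2 : ∀ v ∈ S, CircleIntegrable (fun z => (divisor f (sphere 0 s) v : ℝ) *
        (P * fun z => Real.log ‖z - v‖) z) 0 s := by
    intro v hv
    apply IntervalIntegrable.const_mul
    have q : CircleIntegrable (fun z => Real.log ‖z - v‖) 0 s := by
      apply MeromorphicOn.circleIntegrable_log_norm (f := fun z ↦ z - v)
      intro x _
      fun_prop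
    exact CircleIntegrable.continuousOn_smul q hPc
  rw [circleAverage_congr_codiscreteWithin hcong2 hs.ne', circleAverage_add i1
    (CircleIntegrable.sum _ i2), circleAverage_sum i2]
  have e3 : ∀ v ∈ S, circleAverage (fun z => (divisor f (sphere 0 s) v : ℝ) *
        (P * fun z => Real.log ‖z - v‖) z) 0 s = (divisor f (sphere 0 s) v : ℝ) * Real.log ‖w - v‖ := by
    intro v hv
    rw [← circleAverage_re_herglotzRieszKernel_mul_log (hSs v hv) hw]
    exact circleAverage_fun_smul (a := (divisor f (sphere 0 s) v : ℝ))
  rw [Finset.sum_congr rfl e3]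
  have e4 : circleAverage (P * fun z => Real.log ‖h z‖) 0 s = Real.log ‖h w‖ := h2
  have e1 : (∑ᶠ i, (divisor f (sphere 0 s) i : ℝ) * Real.log ‖w - i‖) =
        ∑ v ∈ S, (divisor f (sphere 0 s) v : ℝ) * Real.log ‖w - v‖ := by
      apply finsum_eq_sum_of_support_subset
      intro v hv
      simp only [Function.mem_support, ne_eq, mul_eq_zero, not_or, Int.cast_eq_zero] at hv
      simpa [hS] using hv.1
  rw [e4, h1, e1]
  ring
end

section
open Complex Real

theorem aux_kernel (z w ζ : ℂ) (s ρ : ℝ) (hz : ‖z‖ ≤ ρ) (hw : ‖w‖ ≤ ρ) (hρ : ρ < s) (hζ : ‖ζ‖ = s) :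
    |(herglotzRieszKernel 0 w ζ).re - (herglotzRieszKernel 0 z ζ).re| ≤
      2 * ‖w - z‖ * s / (s - ρ) ^ 2 := by
  have h1 : s - ρ ≤ ‖ζ - z‖ := by
    have := norm_sub_norm_le ζ z; linarith
  have h2 : s - ρ ≤ ‖ζ - w‖ := by
    have := norm_sub_norm_le ζ w; linarith
  have hp : 0 < s - ρ := by linarith
  have n1 : ζ - z ≠ 0 := norm_pos_iff.1 (by linarith)
  have n2 : ζ - w ≠ 0 := norm_pos_iff.1 (by linarith)
  rw [← Complex.sub_re]
  refine (Complex.abs_re_le_norm _).trans ?_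
  have : herglotzRieszKernel 0 w ζ - herglotzRieszKernel 0 z ζ =
      2 * (w - z) * ζ / ((ζ - w) * (ζ - z)) := by
    simp only [herglotzRieszKernel_def, sub_zero]
    field_simp
    ring
  rw [this, norm_div, norm_mul, norm_mul, norm_mul, hζ, sq]
  have hs : 0 ≤ s := hζ ▸ norm_nonneg ζ
  simp only [Complex.norm_ofNat]
  gcongr

theorem aux_log1 (a b : ℂ) (ha : a ≠ 0) (hb : b ≠ 0) (m : ℝ) (hm : 0 < m) (hma : m ≤ ‖a‖) (hmb : m ≤ ‖b‖) :
    |Real.log ‖a‖ - Real.log ‖b‖| ≤ ‖a - b‖ / m := by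
  have key : ∀ a b : ℂ, a ≠ 0 → b ≠ 0 → m ≤ ‖b‖ → Real.log ‖a‖ - Real.log ‖b‖ ≤ ‖a - b‖ / m := by
    intro a b ha hb hmb
    have hb' : 0 < ‖b‖ := norm_pos_iff.2 hb
    have ha' : 0 < ‖a‖ := norm_pos_iff.2 ha
    rw [← Real.log_div ha'.ne' hb'.ne']
    calc Real.log (‖a‖ / ‖b‖) ≤ ‖a‖ / ‖b‖ - 1 := Real.log_le_sub_one_of_pos (by positivity)
      _ = (‖a‖ - ‖b‖) / ‖b‖ := by field_simp
      _ ≤ ‖a - b‖ / ‖b‖ := by gcongr; exact norm_sub_norm_le a b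
      _ ≤ ‖a - b‖ / m := by gcongr
  rw [abs_le]
  have h1 := key a b ha hb hmb
  have h2 := key b a hb ha hma
  rw [norm_sub_rev b a] at h2
  constructor <;> linarith

theorem aux_log2 (δ : ℝ) (h0 : 0 < δ) (h1 : δ < 1) (a b : ℂ) (ha : a ≠ 0) (hb : b ≠ 0) :
    |Real.log ‖a‖ - Real.log ‖b‖| ≤ ‖a - b‖ ^ δ / δ * (‖a‖ ^ (-δ) + ‖b‖ ^ (-δ)) := by
  have key : ∀ a b : ℂ, a ≠ 0 → b ≠ 0 → Real.log ‖a‖ - Real.log ‖b‖ ≤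
      ‖a - b‖ ^ δ / δ * ‖b‖ ^ (-δ) := by
    intro a b ha hb
    have hb' : 0 < ‖b‖ := norm_pos_iff.2 hb
    have ha' : 0 < ‖a‖ := norm_pos_iff.2 ha
    rw [← Real.log_div ha'.ne' hb'.ne']
    set x := ‖a - b‖ / ‖b‖ with hx
    have hx0 : 0 ≤ x := by positivity
    have e1 : Real.log (‖a‖ / ‖b‖) ≤ Real.log (1 + x) := by
      apply Real.log_le_log (by positivity)
      rw [hx, div_le_iff₀ hb', add_mul, div_mul_cancel₀ _ hb'.ne']
      have := norm_sub_norm_le a b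
      linarith
    have e2 : δ * Real.log (1 + x) ≤ x ^ δ := by
      rw [← Real.log_rpow (by positivity)]
      have := Real.log_le_sub_one_of_pos (x := (1 + x) ^ δ) (by positivity)
      have h3 := Real.rpow_add_le_add_rpow (a := 1) (b := x) zero_le_one hx0 h0.le h1.le
      rw [Real.one_rpow] at h3
      linarith
    have e3 : x ^ δ = ‖a - b‖ ^ δ * ‖b‖ ^ (-δ) := by
      rw [hx, Real.div_rpow (norm_nonneg _) (norm_nonneg _), Real.rpow_neg (norm_nonneg _)]
      rfl
    calc _ ≤ Real.log (1 + x) := e1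
      _ ≤ x ^ δ / δ := by rw [le_div_iff₀ h0]; linarith
      _ = _ := by rw [e3]; ring
  have h1 := key a b ha hb
  have h2 := key b a hb ha
  rw [norm_sub_rev b a] at h2
  have h3 : 0 ≤ ‖a - b‖ ^ δ / δ * ‖b‖ ^ (-δ) := by positivity
  have h4 : 0 ≤ ‖a - b‖ ^ δ / δ * ‖a‖ ^ (-δ) := by positivity
  rw [abs_le, mul_add]
  constructor <;> linarith

theorem aux_factor (s ρ δ : ℝ) (hρ0 : 0 < ρ) (hρ : ρ < s) (h0 : 0 < δ) (h1 : δ < 1) (i z w : ℂ)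
    (hi : ‖i‖ < s) (hz : ‖z‖ ≤ ρ) (hw : ‖w‖ ≤ ρ) (hzi : z ≠ i) (hwi : w ≠ i) :
    |Real.log ‖canonicalFactor s i z‖ - Real.log ‖canonicalFactor s i w‖| ≤
      ‖w - z‖ / (s - ρ) + ‖w - z‖ ^ δ / δ * (‖z - i‖ ^ (-δ) + ‖w - i‖ ^ (-δ)) := by
  have hs : 0 < s := by linarith
  have hp : 0 < s - ρ := by linarith
  have hlow : ∀ z : ℂ, ‖z‖ ≤ ρ → s * (s - ρ) ≤ ‖(s:ℂ) ^ 2 - (starRingEnd ℂ) i * z‖ := by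
    intro z hz
    have := norm_sub_norm_le ((s:ℂ) ^ 2) ((starRingEnd ℂ) i * z)
    rw [norm_pow, norm_mul, RCLike.norm_conj, Complex.norm_real, Real.norm_eq_abs, abs_of_pos hs] at this
    have h2 : ‖i‖ * ‖z‖ ≤ s * ρ := by gcongr
    nlinarith
  have hsp : 0 < s * (s - ρ) := by positivity
  have e : ∀ z : ℂ, ‖z‖ ≤ ρ → z ≠ i → Real.log ‖canonicalFactor s i z‖ =
      Real.log ‖(s:ℂ) ^ 2 - (starRingEnd ℂ) i * z‖ - Real.log s - Real.log ‖z - i‖ := by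
    intro z hz hzi
    have : 0 < ‖z - i‖ := norm_pos_iff.2 (sub_ne_zero.2 hzi)
    have := hlow z hz
    rw [canonicalFactor_apply, norm_div, norm_mul, Complex.norm_real, Real.norm_eq_abs,
      abs_of_pos hs, Real.log_div (by linarith) (by positivity), Real.log_mul (by positivity) (by positivity)]
    ring
  rw [e z hz hzi, e w hw hwi]
  have a1 := aux_log1 ((s:ℂ) ^ 2 - (starRingEnd ℂ) i * z) ((s:ℂ) ^ 2 - (starRingEnd ℂ) i * w)
    (norm_pos_iff.1 (by have := hlow z hz; linarith)) (norm_pos_iff.1 (by have := hlow w hw; linarith))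
    _ hsp (hlow z hz) (hlow w hw)
  have a2 := aux_log2 δ h0 h1 (z - i) (w - i) (sub_ne_zero.2 hzi) (sub_ne_zero.2 hwi)
  have a3 : ‖((s:ℂ) ^ 2 - (starRingEnd ℂ) i * z) - ((s:ℂ) ^ 2 - (starRingEnd ℂ) i * w)‖ / (s * (s - ρ))
      ≤ ‖w - z‖ / (s - ρ) := by
    rw [show ((s:ℂ) ^ 2 - (starRingEnd ℂ) i * z) - ((s:ℂ) ^ 2 - (starRingEnd ℂ) i * w) =
      (starRingEnd ℂ) i * (w - z) by ring, norm_mul, RCLike.norm_conj]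
    rw [div_le_div_iff₀ hsp hp]
    have := mul_le_mul_of_nonneg_right hi.le (mul_nonneg (norm_nonneg (w - z)) hp.le)
    nlinarith
  rw [show z - i - (w - i) = -(w - z) by ring, norm_neg] at a2
  rw [abs_le] at *
  constructor <;> linarith

theorem aux_sin (δ : ℝ) (h0 : 0 < δ) (h1 : δ < 1) (φ : ℝ) :
    IntervalIntegrable (fun t => |Real.sin (t - φ)| ^ (-δ)) volume 0 (2 * π) ∧
    ∫ t in (0:ℝ)..(2 * π), |Real.sin (t - φ)| ^ (-δ) ≤ 2 * π / (1 - δ) := by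
  set h : ℝ → ℝ := fun t => |Real.sin t| ^ (-δ) with hh
  have hmeas : Measurable h := by fun_prop
  have hper : Function.Periodic h π := by
    intro t; simp [hh, Real.sin_add_pi]
  have hpi := Real.pi_pos
  have hg : IntervalIntegrable (fun t : ℝ => (2 / π) ^ (-δ) * t ^ (-δ)) volume 0 (π / 2) :=
    (intervalIntegral.intervalIntegrable_rpow' (by linarith)).const_mul _
  have hle : ∀ t ∈ Set.Ioc 0 (π / 2), h t ≤ (2 / π) ^ (-δ) * t ^ (-δ) := by
    intro t ht
    have := Real.mul_le_sin ht.1.le ht.2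
    have ht0 := ht.1
    rw [← Real.mul_rpow (by positivity) ht0.le]
    apply Real.rpow_le_rpow_of_nonpos (by positivity) _ (by linarith)
    exact this.trans (le_abs_self _)
  have i1 : IntervalIntegrable h volume 0 (π / 2) := by
    apply hg.mono_fun hmeas.aestronglyMeasurable
    rw [Filter.EventuallyLE, ae_restrict_iff' measurableSet_uIoc]
    filter_upwards with t ht
    rw [Set.uIoc_of_le (by positivity)] at ht
    have h2 : 0 ≤ h t := by simp only [hh]; positivity
    rw [Real.norm_of_nonneg h2]
    exact (hle t ht).trans (le_abs_self _)
  have hsym : ∀ t, h (π - t) = h t := by intro t; simp [hh, Real.sin_pi_sub]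
  have i2 : IntervalIntegrable h volume (π / 2) π := by
    have := (i1.comp_sub_left π).symm
    simp only [hsym] at this
    convert this using 1 <;> ring
  have i3 := i1.trans i2
  have b1 : ∫ t in (0:ℝ)..(π / 2), h t ≤ (π / 2) / (1 - δ) := by
    calc _ ≤ ∫ t in (0:ℝ)..(π / 2), (2 / π) ^ (-δ) * t ^ (-δ) := by
          apply intervalIntegral.integral_mono_on_of_le_Ioo (by positivity) i1 hg
          intro t ht; exact hle t ⟨ht.1, ht.2.le⟩
      _ = _ := by
        rw [intervalIntegral.integral_const_mul, integral_rpow (Or.inl (by linarith)),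
          Real.zero_rpow (by linarith), sub_zero, show -δ + 1 = 1 - δ by ring,
          Real.rpow_sub (by positivity), Real.rpow_one, show (2 / π : ℝ) = (π / 2)⁻¹ by field_simp,
          Real.inv_rpow (by positivity), Real.rpow_neg (by positivity), inv_inv]
        have : 0 < (π / 2) ^ δ := by positivity
        field_simp
  have b2 : ∫ t in (π / 2)..π, h t = ∫ t in (0:ℝ)..(π / 2), h t := by
    have := intervalIntegral.integral_comp_sub_left h (a := 0) (b := π / 2) π
    simp only [hsym] at this
    rw [this]
    congr 1 <;> ring
  have b3 : ∫ t in (0:ℝ)..π, h t ≤ π / (1 - δ) := by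
    rw [← intervalIntegral.integral_add_adjacent_intervals i1 i2, b2]
    have : π / (1 - δ) = (π / 2) / (1 - δ) + (π / 2) / (1 - δ) := by ring
    linarith
  have iall : ∀ a b, IntervalIntegrable h volume a b := fun a b =>
    hper.intervalIntegrable₀ Real.pi_pos.ne' i3 a b
  constructor
  · have := (iall (0 - φ) (2 * π - φ)).comp_sub_right φ
    simpa [hh] using this
  · have e := intervalIntegral.integral_comp_sub_right h (a := 0) (b := 2 * π) φ
    change ∫ t in (0:ℝ)..(2 * π), h (t - φ) ≤ _
    rw [e, show 2 * π - φ = (0 - φ) + π + π by ring,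
      ← intervalIntegral.integral_add_adjacent_intervals (iall (0 - φ) (0 - φ + π)) (iall _ _),
      hper.intervalIntegral_add_eq (0 - φ) 0, hper.intervalIntegral_add_eq (0 - φ + π) 0, zero_add]
    have : 2 * π / (1 - δ) = π / (1 - δ) + π / (1 - δ) := by ring
    linarith

theorem aux_avg (r δ : ℝ) (hr : 0 < r) (h0 : 0 < δ) (h1 : δ < 1) (a : ℂ) :
    CircleIntegrable (fun z => ‖z - a‖ ^ (-δ)) 0 r ∧
    circleAverage (fun z => ‖z - a‖ ^ (-δ)) 0 r ≤ 1 / ((1 - δ) * r ^ δ) := by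
  set φ := Complex.arg a
  obtain ⟨hi, hb⟩ := aux_sin δ h0 h1 φ
  have hle : ∀ θ : ℝ, Real.sin (θ - φ) ≠ 0 →
      ‖circleMap 0 r θ - a‖ ^ (-δ) ≤ r ^ (-δ) * |Real.sin (θ - φ)| ^ (-δ) := by
    intro θ hθ
    rw [← Real.mul_rpow hr.le (abs_nonneg _)]
    apply Real.rpow_le_rpow_of_nonpos (by positivity) _ (by linarith)
    have e : ‖circleMap 0 r θ - a‖ = ‖(r : ℂ) * Complex.exp ((θ - φ : ℝ) * I) - ‖a‖‖ := by
      have ha : a = ‖a‖ * Complex.exp (φ * I) := (Complex.norm_mul_exp_arg_mul_I a).symm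
      have : circleMap 0 r θ - a = ((r : ℂ) * Complex.exp ((θ - φ : ℝ) * I) - ‖a‖) * Complex.exp (φ * I) := by
        conv_lhs => rw [ha]
        rw [sub_mul, mul_assoc, ← Complex.exp_add, circleMap, zero_add]
        congr 3
        push_cast; ring
      rw [this, norm_mul, Complex.norm_exp_ofReal_mul_I, mul_one]
    rw [e]
    refine le_trans (le_of_eq ?_) (Complex.abs_im_le_norm _)
    rw [Complex.sub_im, Complex.ofReal_im, sub_zero, Complex.im_ofReal_mul, Complex.exp_ofReal_mul_I_im,
      abs_mul, abs_of_pos hr]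
  have hae : ∀ᵐ θ : ℝ, Real.sin (θ - φ) ≠ 0 := by
    have hc : (Set.range (fun n : ℤ => (n : ℝ) * π + φ)).Countable := Set.countable_range _
    have := hc.ae_notMem (volume : Measure ℝ)
    filter_upwards [this] with θ hθ hs
    obtain ⟨n, hn⟩ := Real.sin_eq_zero_iff.1 hs
    exact hθ ⟨n, by simp only [hn]; ring⟩
  have hi2 : IntervalIntegrable (fun θ => r ^ (-δ) * |Real.sin (θ - φ)| ^ (-δ)) volume 0 (2 * π) :=
    hi.const_mul _
  have hI : CircleIntegrable (fun z => ‖z - a‖ ^ (-δ)) 0 r := by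
    have : Measurable (fun θ : ℝ => ‖circleMap 0 r θ - a‖ ^ (-δ)) := by
      have : Continuous (circleMap 0 r) := continuous_circleMap 0 r
      have := this.measurable
      fun_prop
    apply hi2.mono_fun this.aestronglyMeasurable
    apply ae_restrict_of_ae
    filter_upwards [hae] with θ hθ
    rw [Real.norm_of_nonneg (by positivity)]
    exact (hle θ hθ).trans (le_abs_self _)
  refine ⟨hI, ?_⟩
  have hpi := Real.pi_pos
  rw [circleAverage, smul_eq_mul]
  have h3 : ∫ θ in (0:ℝ)..(2 * π), ‖circleMap 0 r θ - a‖ ^ (-δ) ≤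
      ∫ θ in (0:ℝ)..(2 * π), r ^ (-δ) * |Real.sin (θ - φ)| ^ (-δ) := by
    apply intervalIntegral.integral_mono_ae (by positivity) hI hi2
    filter_upwards [hae] with θ hθ
    exact hle θ hθ
  rw [intervalIntegral.integral_const_mul] at h3
  have h4 : 0 < r ^ δ := by positivity
  have h5 : 0 < 1 - δ := by linarith
  calc _ ≤ (2 * π)⁻¹ * (r ^ (-δ) * (2 * π / (1 - δ))) := by
        gcongr; exact h3.trans (by gcongr)
    _ = _ := by rw [Real.rpow_neg hr.le]; field_simp
end

section
open Complex Real MeromorphicOn ValueDistribution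

theorem aux_ae (g : ℂ → ℂ) (hg : Meromorphic g) (ht : ∀ z, meromorphicOrderAt g z ≠ ⊤) (r : ℝ) (hr : 0 < r) :
    ∀ᵐ θ ∂(volume.restrict (Set.uIoc 0 (2 * π))),
      AnalyticAt ℂ g (circleMap 0 r θ) ∧ g (circleMap 0 r θ) ≠ 0 := by
  have hm : MeromorphicOn g (sphere 0 |r|) := fun x _ => hg x
  have h1 : ∀ᶠ z in codiscreteWithin (sphere (0:ℂ) |r|), AnalyticAt ℂ g z ∧ g z ≠ 0 := by
    filter_upwards [hm.analyticAt_mem_codiscreteWithin,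
      MeromorphicAt.MeromorphicOn.codiscreteWithin_setOfPred_ne_zero hm (fun u _ => ht u)] with z h1 h2
    exact ⟨h1, h2⟩
  apply ae_restrict_le_codiscreteWithin measurableSet_uIoc
  exact codiscreteWithin_mono (by tauto) (circleMap_preimage_codiscrete hr.ne' h1)

theorem aux_S (f : ℂ → ℂ) (hf : Meromorphic f)
    (h0 : meromorphicOrderAt f 0 = 0) (s R : ℝ) (hs : 0 < s) (hR : s < R) :
    ∃ S : Finset ℂ, (∀ i ∈ S, ‖i‖ < s) ∧ (∀ i, divisor f (ball 0 s) i ≠ 0 → i ∈ S) ∧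
      (∑ i ∈ S, |(divisor f (ball 0 s) i : ℝ)|) * (1 - s / R) ≤
        logCounting f 0 R + logCounting f ⊤ R := by
  classical
  have hR0 : 0 < R := by linarith
  set D := divisor f Set.univ with hD
  set E := D⁺ + D⁻ with hE
  have hEz : ∀ z, (E z : ℤ) = |D z| := by
    intro z
    rw [hE, Function.locallyFinsuppWithin.coe_add, Pi.add_apply,
      Function.locallyFinsuppWithin.posPart_apply, Function.locallyFinsuppWithin.negPart_apply,
      posPart_add_negPart]
  have hD0 : D 0 = 0 := by
    rw [hD, divisor_apply hf.meromorphicOn (Set.mem_univ 0), h0]; rfl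
  have hE0 : E 0 = 0 := by rw [hEz, hD0, abs_zero]
  have hball : ∀ i ∈ ball (0:ℂ) s, divisor f (ball 0 s) i = D i := by
    intro i hi
    rw [hD, divisor_apply hf.meromorphicOn (Set.mem_univ i), divisor_apply hf.meromorphicOn hi]
  have hfin : ((E.toClosedBall R).support).Finite :=
    (E.toClosedBall R).finiteSupport (isCompact_closedBall 0 |R|)
  have hin : ∀ z ∈ closedBall (0:ℂ) R, E.toClosedBall R z = E z := fun z hz =>
    Function.locallyFinsuppWithin.toClosedBall_eval_within E (by rwa [abs_of_pos hR0])
  set T := hfin.toFinset with hT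
  have hTb : ∀ z ∈ T, 0 < ‖z‖ ∧ ‖z‖ ≤ R := by
    intro z hz
    have hz' : E.toClosedBall R z ≠ 0 := by simpa [hT] using hz
    have h1 : z ∈ closedBall (0:ℂ) R := by
      have := Function.locallyFinsuppWithin.toClosedBall_support_subset_closedBall (r := R) E hz'
      rwa [abs_of_pos hR0] at this
    refine ⟨norm_pos_iff.2 ?_, by simpa using h1⟩
    rintro rfl
    exact hz' (by rw [hin 0 h1, hE0])
  have hcount : logCounting f 0 R + logCounting f ⊤ R =
      ∑ z ∈ T, (E z : ℝ) * Real.log (R * ‖z‖⁻¹) := by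
    rw [logCounting_zero, logCounting_top, ← Pi.add_apply, ← map_add]
    change E.logCounting R = _
    simp only [Function.locallyFinsuppWithin.logCounting, AddMonoidHom.coe_mk, ZeroHom.coe_mk, hE0]
    simp only [zero_mul, add_zero, Int.cast_zero]
    rw [finsum_eq_sum_of_support_subset (s := T)]
    · apply Finset.sum_congr rfl
      intro z hz
      rw [hin z (by simpa using (hTb z hz).2)]
    · intro z hz
      simp only [Function.mem_support, ne_eq, mul_eq_zero, not_or, Int.cast_eq_zero] at hz
      simpa [hT] using hz.1
  refine ⟨T.filter (fun i => ‖i‖ < s), by intro i hi; exact (Finset.mem_filter.1 hi).2, ?_, ?_⟩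
  · intro i hi
    have hib : i ∈ ball (0:ℂ) s := by
      by_contra hcon
      exact hi (Function.locallyFinsuppWithin.apply_eq_zero_of_notMem _ hcon)
    have hin' : ‖i‖ < s := by simpa using hib
    refine Finset.mem_filter.2 ⟨?_, hin'⟩
    rw [hball i hib] at hi
    simp only [hT, Set.Finite.mem_toFinset, Function.mem_support]
    rw [hin i (by simpa using (hin'.trans hR).le), hEz]
    exact abs_ne_zero.2 hi
  · rw [hcount, Finset.sum_mul]
    have hnn : ∀ z ∈ T, 0 ≤ (E z : ℝ) * Real.log (R * ‖z‖⁻¹) := by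
      intro z hz
      obtain ⟨a, b⟩ := hTb z hz
      apply mul_nonneg
      · rw [hEz]; exact_mod_cast abs_nonneg (D z)
      · apply Real.log_nonneg
        rw [← div_eq_mul_inv, one_le_div a]; exact b
    refine le_trans ?_ (Finset.sum_le_sum_of_subset_of_nonneg
      (Finset.filter_subset (fun i : ℂ => ‖i‖ < s) T)
      (fun z hz _ => hnn z hz))
    apply Finset.sum_le_sum
    intro z hz
    obtain ⟨hz1, hz2⟩ := Finset.mem_filter.1 hz
    obtain ⟨a, b⟩ := hTb z hz1
    rw [hball z (by simpa using hz2), hEz, Int.cast_abs]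
    apply mul_le_mul_of_nonneg_left _ (abs_nonneg _)
    have h1 := Real.one_sub_inv_le_log_of_pos (x := R * ‖z‖⁻¹) (by positivity)
    have h2 : (R * ‖z‖⁻¹)⁻¹ ≤ s / R := by
      rw [mul_inv, inv_inv, mul_comm, ← div_eq_mul_inv]
      gcongr
    linarith

theorem aux_pointwise (f : ℂ → ℂ) (hf : Meromorphic f) (ht : ∀ z, meromorphicOrderAt f z ≠ ⊤)
    (s ρ δ : ℝ) (hρ0 : 0 < ρ) (hρ : ρ < s) (hδ0 : 0 < δ) (hδ1 : δ < 1) (z w : ℂ)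
    (hz : ‖z‖ ≤ ρ) (hw : ‖w‖ ≤ ρ) (haz : AnalyticAt ℂ f z) (hnz : f z ≠ 0)
    (haw : AnalyticAt ℂ f w) (hnw : f w ≠ 0) (S : Finset ℂ) (hS1 : ∀ i ∈ S, ‖i‖ < s)
    (hS2 : ∀ i, divisor f (ball 0 s) i ≠ 0 → i ∈ S) :
    Real.posLog ‖f w / f z‖ ≤ 2 * ‖w - z‖ * s / (s - ρ) ^ 2 *
        circleAverage (fun ζ => |Real.log ‖f ζ‖|) 0 s +
      ∑ i ∈ S, |(divisor f (ball 0 s) i : ℝ)| *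
        (‖w - z‖ / (s - ρ) + ‖w - z‖ ^ δ / δ * (‖z - i‖ ^ (-δ) + ‖w - i‖ ^ (-δ))) := by
  have hs : 0 < s := by linarith
  have hzb : z ∈ ball (0:ℂ) s := by simpa using hz.trans_lt hρ
  have hwb : w ∈ ball (0:ℂ) s := by simpa using hw.trans_lt hρ
  have Pz := aux_PJ f hf ht s z hzb haz hnz
  have Pw := aux_PJ f hf ht s w hwb haw hnw
  have Iz := aux_kernelInt f hf s z hzb
  have Iw := aux_kernelInt f hf s w hwb
  have hfs : ∀ u : ℂ, (∑ᶠ i, (divisor f (ball 0 s) i : ℝ) * Real.log ‖canonicalFactor s i u‖) =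
      ∑ i ∈ S, (divisor f (ball 0 s) i : ℝ) * Real.log ‖canonicalFactor s i u‖ := by
    intro u
    apply finsum_eq_sum_of_support_subset
    intro v hv
    simp only [Function.mem_support, ne_eq, mul_eq_zero, not_or, Int.cast_eq_zero] at hv
    exact hS2 v hv.1
  rw [hfs] at Pz Pw
  have hIlog : CircleIntegrable (fun ζ => Real.log ‖f ζ‖) 0 s :=
    (hf.meromorphicOn).circleIntegrable_log_norm
  have hsph : ∀ ζ ∈ sphere (0:ℂ) |s|, ‖ζ‖ = s := by
    intro ζ hζ; rw [abs_of_pos hs] at hζ; simpa using hζ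
  set C := 2 * ‖w - z‖ * s / (s - ρ) ^ 2 with hC
  have hdiff : |circleAverage ((Complex.re ∘ herglotzRieszKernel 0 w) * (fun z => Real.log ‖f z‖)) 0 s -
      circleAverage ((Complex.re ∘ herglotzRieszKernel 0 z) * (fun z => Real.log ‖f z‖)) 0 s| ≤
      C * circleAverage (fun ζ => |Real.log ‖f ζ‖|) 0 s := by
    rw [← circleAverage_sub Iw Iz]
    refine abs_circleAverage_le_circleAverage_abs.trans ?_
    have hsm : C * circleAverage (fun ζ => |Real.log ‖f ζ‖|) 0 s =
        circleAverage (fun ζ => C • |Real.log ‖f ζ‖|) 0 s :=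
      (circleAverage_fun_smul (a := C) (f := fun ζ => |Real.log ‖f ζ‖|)).symm
    rw [hsm]
    apply circleAverage_mono
    · exact (Iw.sub Iz).abs
    · exact IntervalIntegrable.const_mul (hIlog.abs) C
    · intro ζ hζ
      have := aux_kernel z w ζ s ρ hz hw hρ (hsph ζ hζ)
      simp only [Pi.abs_apply, Pi.sub_apply, Pi.mul_apply, Function.comp_apply, smul_eq_mul]
      rw [← sub_mul, abs_mul]
      gcongr
  have hterm : ∀ i ∈ S, |(divisor f (ball 0 s) i : ℝ) * Real.log ‖canonicalFactor s i z‖ -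
      (divisor f (ball 0 s) i : ℝ) * Real.log ‖canonicalFactor s i w‖| ≤
      |(divisor f (ball 0 s) i : ℝ)| *
        (‖w - z‖ / (s - ρ) + ‖w - z‖ ^ δ / δ * (‖z - i‖ ^ (-δ) + ‖w - i‖ ^ (-δ))) := by
    intro i hi
    rw [← mul_sub, abs_mul]
    by_cases hd : divisor f (ball 0 s) i = 0
    · simp [hd]
    have hib : i ∈ ball (0:ℂ) s := by simpa using hS1 i hi
    have good : ∀ u : ℂ, AnalyticAt ℂ f u → f u ≠ 0 → u ≠ i := by
      rintro u ha hn rfl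
      apply hd
      rw [divisor_apply hf.meromorphicOn hib,
        (ha.meromorphicNFAt.meromorphicOrderAt_eq_zero_iff).2 hn]
      rfl
    exact mul_le_mul_of_nonneg_left (aux_factor s ρ δ hρ0 hρ hδ0 hδ1 i z w (hS1 i hi) hz hw
      (good z haz hnz) (good w haw hnw)) (abs_nonneg _)
  have hsum := (Finset.abs_sum_le_sum_abs (fun i => (divisor f (ball 0 s) i : ℝ) * Real.log ‖canonicalFactor s i z‖ -
      (divisor f (ball 0 s) i : ℝ) * Real.log ‖canonicalFactor s i w‖) S).trans (Finset.sum_le_sum hterm)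
  rw [Finset.sum_sub_distrib] at hsum
  have hlog : Real.log ‖f w / f z‖ = Real.log ‖f w‖ - Real.log ‖f z‖ := by
    rw [norm_div, Real.log_div (norm_ne_zero_iff.2 hnw) (norm_ne_zero_iff.2 hnz)]
  rw [Real.posLog_def]
  apply max_le
  · exact add_nonneg ((abs_nonneg _).trans hdiff) ((abs_nonneg _).trans hsum)
  · change Real.log ‖f w / f z‖ ≤ _
    rw [hlog]
    have a1 := (le_abs_self _).trans hdiff
    have a2 := (le_abs_self _).trans hsum
    linarith

theorem aux_average (f : ℂ → ℂ) (hf : Meromorphic f) (ht : ∀ z, meromorphicOrderAt f z ≠ ⊤)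
    (c : ℂ) (hg : Meromorphic (fun z => f (z + c)))
    (htg : ∀ z, meromorphicOrderAt (fun z => f (z + c)) z ≠ ⊤)
    (r s δ : ℝ) (hr : 0 < r) (hs : r + ‖c‖ < s) (hδ0 : 0 < δ) (hδ1 : δ < 1)
    (S : Finset ℂ) (hS1 : ∀ i ∈ S, ‖i‖ < s)
    (hS2 : ∀ i, divisor f (ball 0 s) i ≠ 0 → i ∈ S) :
    circleAverage (fun z => Real.posLog ‖f (z + c) / f z‖) 0 r ≤
      2 * ‖c‖ * s / (s - (r + ‖c‖)) ^ 2 * circleAverage (fun ζ => |Real.log ‖f ζ‖|) 0 s +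
      (∑ i ∈ S, |(divisor f (ball 0 s) i : ℝ)|) *
        (‖c‖ / (s - (r + ‖c‖)) + ‖c‖ ^ δ / δ * (2 / ((1 - δ) * r ^ δ))) := by
  set ρ := r + ‖c‖ with hρ
  set A := 2 * ‖c‖ * s / (s - ρ) ^ 2 * circleAverage (fun ζ => |Real.log ‖f ζ‖|) 0 s
  set d : ℂ → ℝ := fun i => |(divisor f (ball 0 s) i : ℝ)|
  have hρ0 : 0 < ρ := by positivity
  set B : ℂ → ℂ → ℝ := fun i => (fun z => d i *
        (‖c‖ / (s - ρ) + ‖c‖ ^ δ / δ * (‖z - i‖ ^ (-δ) + ‖z - (i - c)‖ ^ (-δ)))) with hB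
  have hconst : ∀ k : ℝ, CircleIntegrable (fun _ : ℂ => k) 0 r := fun k => circleIntegrable_const _ _ _
  have hBi : ∀ i ∈ S, CircleIntegrable (B i) 0 r ∧ circleAverage (B i) 0 r ≤
      d i * (‖c‖ / (s - ρ) + ‖c‖ ^ δ / δ * (2 / ((1 - δ) * r ^ δ))) := by
    intro i _
    obtain ⟨i1, b1⟩ := aux_avg r δ hr hδ0 hδ1 i
    obtain ⟨i2, b2⟩ := aux_avg r δ hr hδ0 hδ1 (i - c)
    have i3 : CircleIntegrable (fun z => ‖z - i‖ ^ (-δ) + ‖z - (i - c)‖ ^ (-δ)) 0 r := i1.add i2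
    have i4 : CircleIntegrable (fun z => ‖c‖ ^ δ / δ * (‖z - i‖ ^ (-δ) + ‖z - (i - c)‖ ^ (-δ))) 0 r :=
      IntervalIntegrable.const_mul i3 _
    have i5 : CircleIntegrable (fun z => ‖c‖ / (s - ρ) +
        ‖c‖ ^ δ / δ * (‖z - i‖ ^ (-δ) + ‖z - (i - c)‖ ^ (-δ))) 0 r := (hconst _).add i4
    refine ⟨IntervalIntegrable.const_mul i5 _, ?_⟩
    have e5 : circleAverage (B i) 0 r = d i • circleAverage (fun z => ‖c‖ / (s - ρ) +
        ‖c‖ ^ δ / δ * (‖z - i‖ ^ (-δ) + ‖z - (i - c)‖ ^ (-δ))) 0 r :=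
      circleAverage_fun_smul (a := d i)
    have e4 := circleAverage_fun_add (hconst (‖c‖ / (s - ρ))) i4
    have e3 : circleAverage (fun z => ‖c‖ ^ δ / δ * (‖z - i‖ ^ (-δ) + ‖z - (i - c)‖ ^ (-δ))) 0 r =
      (‖c‖ ^ δ / δ) • circleAverage (fun z => (‖z - i‖ ^ (-δ) + ‖z - (i - c)‖ ^ (-δ))) 0 r :=
      circleAverage_fun_smul (a := ‖c‖ ^ δ / δ)
    have e2 := circleAverage_fun_add i1 i2
    rw [e5, e4, e3, e2, circleAverage_const, smul_eq_mul, smul_eq_mul]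
    have hd : 0 ≤ d i := abs_nonneg _
    have : 2 / ((1 - δ) * r ^ δ) = 1 / ((1 - δ) * r ^ δ) + 1 / ((1 - δ) * r ^ δ) := by ring
    rw [this]
    gcongr
  have hBs : CircleIntegrable (∑ i ∈ S, B i) 0 r := CircleIntegrable.sum S (fun i hi => (hBi i hi).1)
  have hAB : CircleIntegrable ((fun _ => A) + ∑ i ∈ S, B i) 0 r := (hconst A).add hBs
  have hL : CircleIntegrable (fun z => Real.posLog ‖f (z + c) / f z‖) 0 r := by
    apply MeromorphicOn.circleIntegrable_posLog_norm (f := fun z => f (z + c) / f z)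
    intro x _
    exact (hg x).div (hf x)
  have hmain : circleAverage (fun z => Real.posLog ‖f (z + c) / f z‖) 0 r ≤
      circleAverage ((fun _ => A) + ∑ i ∈ S, B i) 0 r := by
    unfold circleAverage
    rw [smul_eq_mul, smul_eq_mul]
    have hpi := Real.pi_pos
    apply mul_le_mul_of_nonneg_left _ (by positivity)
    apply intervalIntegral.integral_mono_ae_restrict (by positivity) hL hAB
    have hsub : volume.restrict (Set.Icc 0 (2 * π)) = volume.restrict (Set.uIoc 0 (2 * π)) := by
      rw [Set.uIoc_of_le (by positivity)]
      exact restrict_Ioc_eq_restrict_Icc.symm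
    rw [hsub]
    filter_upwards [aux_ae f hf ht r hr, aux_ae _ hg htg r hr] with θ h1 h2
    set z := circleMap 0 r θ
    have hzr : ‖z‖ = r := by simp [z, abs_of_pos hr]
    have haw : AnalyticAt ℂ f (z + c) := by
      have h3 : AnalyticAt ℂ (fun u : ℂ => u - c) (z + c) := by fun_prop
      have h4 : AnalyticAt ℂ (fun z => f (z + c)) ((fun u : ℂ => u - c) (z + c)) := by simpa using h2.1
      have := AnalyticAt.comp (f := fun u : ℂ => u - c) h4 h3
      simpa [Function.comp_def] using this
    have := aux_pointwise f hf ht s ρ δ hρ0 hs hδ0 hδ1 z (z + c) (by rw [hzr, hρ]; have := norm_nonneg c; linarith)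
      (by rw [hρ, ← hzr]; exact norm_add_le z c) h1.1 h1.2 haw h2.2 S hS1 hS2
    simp only [add_sub_cancel_left] at this
    simp only [Pi.add_apply, Finset.sum_apply, hB]
    convert this using 8
    ring_nf
  refine hmain.trans ?_
  rw [circleAverage_add (hconst A) hBs, circleAverage_const, circleAverage_sum (fun i hi => (hBi i hi).1),
    Finset.sum_mul]
  gcongr with i hi
  exact (hBi i hi).2

theorem aux_abslog (f : ℂ → ℂ) (hf : Meromorphic f) (s : ℝ) :
    circleAverage (fun ζ => |Real.log ‖f ζ‖|) 0 s = proximity f ⊤ s + proximity f⁻¹ ⊤ s := by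
  have hi : CircleIntegrable (fun z => Real.posLog ‖f z‖) 0 s :=
    (hf.meromorphicOn).circleIntegrable_posLog_norm
  have hi2 : CircleIntegrable (fun z => Real.posLog ‖f⁻¹ z‖) 0 s :=
    (hf.inv.meromorphicOn).circleIntegrable_posLog_norm
  rw [proximity_top, proximity_top, ← circleAverage_fun_add hi hi2]
  congr 1
  ext z
  have h1 := Real.half_mul_log_add_log_abs (x := ‖f z‖)
  have h2 := Real.half_mul_log_add_log_abs (x := ‖f z‖⁻¹)
  rw [Real.log_inv, abs_neg] at h2
  rw [Pi.inv_apply, norm_inv, ← h1, ← h2]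
  ring
end

theorem aux_final (α δ r ρ s C n K L M : ℝ) (hα : 1 < α) (hδ0 : 0 < δ) (hδ1 : δ < 1) (hr : 1 ≤ r)
    (hρ : r ≤ ρ) (hC : 0 ≤ C) (hs : s = (α + 1) / 2 * ρ) (hL : L ≤ 2 * K) (hn : n ≤ 4 * α / (α - 1) * K)
    (hK : 0 ≤ K)
    (hM : M ≤ 2 * C * s / (s - ρ) ^ 2 * L + n * (C / (s - ρ) + C ^ δ / δ * (2 / ((1 - δ) * r ^ δ)))) :
    M ≤ (8 * C * (3 * α + 1) + 8 * α * (α - 1) * C ^ δ) / (δ * (1 - δ) * (α - 1) ^ 2 * r ^ δ) * K := by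
  have hr0 : 0 < r := by linarith
  have hρ0 : 0 < ρ := by linarith
  have hα1 : 0 < α - 1 := by linarith
  have hδ2 : 0 < 1 - δ := by linarith
  have hsρ : s - ρ = (α - 1) / 2 * ρ := by rw [hs]; ring
  have hrd : 0 < r ^ δ := by positivity
  have hrr : r ^ δ ≤ ρ := by
    have := Real.rpow_le_rpow_of_exponent_le hr hδ1.le
    rw [Real.rpow_one] at this
    linarith
  have hCd : 0 ≤ C ^ δ := by positivity
  have hs0 : 0 < s := by rw [hs]; positivity
  set X := C ^ δ
  set Y := r ^ δ
  have hp : 0 < s - ρ := by rw [hsρ]; positivity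
  have h1 : 2 * C * s / (s - ρ) ^ 2 * L + n * (C / (s - ρ) + X / δ * (2 / ((1 - δ) * Y))) ≤
      2 * C * s / (s - ρ) ^ 2 * (2 * K) + 4 * α / (α - 1) * K * (C / (s - ρ) + X / δ * (2 / ((1 - δ) * Y))) := by
    gcongr
  have h2 : 2 * C * s / (s - ρ) ^ 2 * (2 * K) + 4 * α / (α - 1) * K * (C / (s - ρ) + X / δ * (2 / ((1 - δ) * Y))) =
      (8 * C * (α + 1) + 8 * α * C) / (α - 1) ^ 2 * K / ρ +
        8 * α * (α - 1) * X / (δ * (1 - δ) * (α - 1) ^ 2 * Y) * K := by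
    rw [hsρ, hs]; field_simp; ring
  have h3 : (8 * C * (α + 1) + 8 * α * C) / (α - 1) ^ 2 * K / ρ ≤
      (8 * C * (α + 1) + 8 * α * C) / (α - 1) ^ 2 * K / Y := by
    gcongr
  have h4 : (8 * C * (α + 1) + 8 * α * C) / (α - 1) ^ 2 * K / Y ≤
      8 * C * (3 * α + 1) / (δ * (1 - δ) * (α - 1) ^ 2 * Y) * K := by
    have hd : δ * (1 - δ) ≤ 1 := by nlinarith
    calc _ = (8 * C * (α + 1) + 8 * α * C) / (1 * (α - 1) ^ 2 * Y) * K := by field_simp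
      _ ≤ _ := by
        gcongr
        nlinarith [mul_nonneg hC hα1.le]
  rw [add_div, add_mul]
  linarith

/-- **Key lemma.** Let `f` be meromorphic on ℂ with `f(0) ≠ 0, ∞` and let `c ∈ ℂ`.
Then for all `α > 1`, `0 < δ < 1` and `r ≥ 1`,
`m(r, f(z+c)/f(z)) ≤ (8|c|(3α+1) + 8α(α−1)|c|^δ) / (δ(1−δ)(α−1)² r^δ)
  · (T(α(r+|c|), f) + log⁺(1/|f(0)|))`. -/
theorem proximity_shift_quotient_bound (f : ℂ → ℂ) (hf : MeromorphicOn f Set.univ)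
    (h0 : AnalyticAt ℂ f 0) (hf0 : f 0 ≠ 0) (c : ℂ) (α δ r : ℝ)
    (hα : 1 < α) (hδ0 : 0 < δ) (hδ1 : δ < 1) (hr : 1 ≤ r) :
    nevm (fun z => f (z + c) / f z) r ≤
      (8 * ‖c‖ * (3 * α + 1) + 8 * α * (α - 1) * ‖c‖ ^ δ) /
          (δ * (1 - δ) * (α - 1) ^ 2 * r ^ δ) *
        (nevT f (α * (r + ‖c‖)) + logPlus (1 / ‖f 0‖)) := by
  have hm : Meromorphic f := fun x => hf x (Set.mem_univ x)
  have hord0 : meromorphicOrderAt f 0 = 0 := by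
    rw [h0.meromorphicNFAt.meromorphicOrderAt_eq_zero_iff]; exact hf0
  have ht : ∀ z, meromorphicOrderAt f z ≠ ⊤ :=
    hm.exists_meromorphicOrderAt_ne_top_iff_forall.1 ⟨0, by rw [hord0]; simp⟩
  have hg : Meromorphic (fun z => f (z + c)) := by
    intro x
    have h3 : AnalyticAt ℂ (fun u : ℂ => u + c) x := by fun_prop
    exact MeromorphicAt.comp_analyticAt (g := fun u : ℂ => u + c) (hm (x + c)) h3
  have htg : ∀ z, meromorphicOrderAt (fun z => f (z + c)) z ≠ ⊤ := by
    apply hg.exists_meromorphicOrderAt_ne_top_iff_forall.1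
    refine ⟨-c, ?_⟩
    have h3 : AnalyticAt ℂ (fun u : ℂ => u + c) (-c) := by fun_prop
    have h4 : AnalyticAt ℂ f ((fun u : ℂ => u + c) (-c)) := by simpa using h0
    have h5 : AnalyticAt ℂ (fun z => f (z + c)) (-c) :=
      AnalyticAt.comp (f := fun u : ℂ => u + c) h4 h3
    rw [(h5.meromorphicNFAt.meromorphicOrderAt_eq_zero_iff).2 (by simpa using hf0)]
    simp
  have hr0 : 0 < r := by linarith
  have hc := norm_nonneg c
  set ρ := r + ‖c‖ with hρ
  have hρr : r ≤ ρ := by linarith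
  have hρ0 : 0 < ρ := by linarith
  have hα1 : 0 < α - 1 := by linarith
  set s := (α + 1) / 2 * ρ with hs
  have hsρ : s - ρ = (α - 1) / 2 * ρ := by rw [hs]; ring
  have hsR : s < α * ρ := by
    have : 0 < (α - 1) / 2 * ρ := by positivity
    rw [hs]; nlinarith
  have hlt : ρ < s := by
    have : 0 < (α - 1) / 2 * ρ := by positivity
    linarith
  have hs1 : 1 ≤ s := by linarith
  have hR0 : 0 < α * ρ := by linarith
  obtain ⟨S, hS1, hS2, hS3⟩ := aux_S f hm hord0 s (α * ρ) (by linarith) hsR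
  have havg := aux_average f hm ht c hg htg r s δ hr0 hlt hδ0 hδ1 S hS1 hS2
  rw [aux_nevm, aux_nevT f hm ht hord0 (α * ρ) hR0]
  set n := ∑ i ∈ S, |(MeromorphicOn.divisor f (ball 0 s) i : ℝ)| with hn
  set K := ValueDistribution.characteristic f ⊤ (α * ρ) + logPlus (1 / ‖f 0‖) with hK
  have hinv : ∀ t, 0 < t → t ≤ α * ρ → ValueDistribution.characteristic f ⊤ t ≤ K ∧
      ValueDistribution.characteristic f⁻¹ ⊤ t ≤ K := by
    intro t ht0 htR
    have h1 := ValueDistribution.characteristic_monotoneOn hm (Set.mem_Ioi.2 ht0) (Set.mem_Ioi.2 hR0) htR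
    have h2 := ValueDistribution.characteristic_sub_characteristic_inv_of_ne_zero hm ht0.ne'
    rw [h0.meromorphicTrailingCoeffAt_of_ne_zero hf0] at h2
    have h3 : 0 ≤ logPlus (1 / ‖f 0‖) := le_max_right _ _
    have h4 : - Real.log ‖f 0‖ ≤ logPlus (1 / ‖f 0‖) := by
      rw [← Real.log_inv, ← one_div]; exact le_max_left _ _
    constructor <;> linarith
  have hL : Real.circleAverage (fun ζ => |Real.log ‖f ζ‖|) 0 s ≤ 2 * K := by
    rw [aux_abslog f hm s]
    obtain ⟨h1, h2⟩ := hinv s (by linarith) hsR.le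
    have h3 := ValueDistribution.logCounting_nonneg (f := f) (e := ⊤) hs1
    have h4 := ValueDistribution.logCounting_nonneg (f := f⁻¹) (e := ⊤) hs1
    simp only [ValueDistribution.characteristic, Pi.add_apply] at h1 h2
    linarith
  have hN : n * ((α - 1) / (2 * α)) ≤ 2 * K := by
    obtain ⟨h1, h2⟩ := hinv (α * ρ) hR0 le_rfl
    have h3 : 0 ≤ ValueDistribution.proximity f ⊤ (α * ρ) := ValueDistribution.proximity_nonneg _
    have h4 : 0 ≤ ValueDistribution.proximity f⁻¹ ⊤ (α * ρ) := ValueDistribution.proximity_nonneg _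
    simp only [ValueDistribution.characteristic, Pi.add_apply, ValueDistribution.logCounting_inv] at h1 h2
    have e : 1 - s / (α * ρ) = (α - 1) / (2 * α) := by
      rw [hs]; field_simp; ring
    rw [e] at hS3
    linarith
  have hn0 : 0 ≤ n := Finset.sum_nonneg (fun _ _ => abs_nonneg _)
  have hK0 : 0 ≤ K := by
    have : 0 ≤ n * ((α - 1) / (2 * α)) := by positivity
    linarith
  have hN' : n ≤ 4 * α / (α - 1) * K := by
    rw [mul_div_assoc', div_le_iff₀ (by positivity)] at hN
    rw [div_mul_eq_mul_div, le_div_iff₀ hα1]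
    linarith
  exact aux_final α δ r ρ s ‖c‖ n K _ _ hα hδ0 hδ1 hr hρr hc hs hL hN' hK0 havg
end

section
/- For all a, c ∈ ℂ, every δ with 0 < δ < 1, and every r > 0, one has (1/2π) ∫₀^{2π} log⁺ | 1 − c/(re^{iθ} + c − a) | dθ ≤ |c|^δ / ( δ(1−δ) r^δ ). -/
open MeasureTheory Filter Topology Metric

lemma aux_quarter (G : ℝ → ℝ) (hG : Measurable G) (K δ : ℝ) (hδ1 : δ < 1)
    (h0 : ∀ t, 0 ≤ G t)
    (hb : ∀ t ∈ Set.Ioo (0:ℝ) (Real.pi / 2), G t ≤ K * (2 / Real.pi * t) ^ (-δ)) :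
    IntervalIntegrable G volume 0 (Real.pi / 2) ∧
      ∫ t in (0:ℝ)..(Real.pi / 2), G t ≤ K * (Real.pi / 2 / (1 - δ)) := by
  have hpi := Real.pi_pos
  have hint : IntervalIntegrable (fun t : ℝ => K * (2 / Real.pi * t) ^ (-δ)) volume 0 (Real.pi / 2) := by
    have h1 : IntervalIntegrable (fun t : ℝ => t ^ (-δ)) volume 0 1 :=
      intervalIntegral.intervalIntegrable_rpow' (by linarith)
    have h2 := h1.comp_mul_left (c := 2 / Real.pi)
    have e : (1:ℝ) / (2 / Real.pi) = Real.pi / 2 := by field_simp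
    rw [e, zero_div] at h2
    exact h2.const_mul K
  have hle : (0:ℝ) ≤ Real.pi / 2 := by positivity
  have hGi : IntervalIntegrable G volume 0 (Real.pi / 2) := by
    rw [intervalIntegrable_iff_integrableOn_Ioo_of_le hle] at hint ⊢
    refine Integrable.mono' hint hG.aestronglyMeasurable ?_
    filter_upwards [ae_restrict_mem measurableSet_Ioo] with t ht
    rw [Real.norm_of_nonneg (h0 t)]
    exact hb t ht
  refine ⟨hGi, ?_⟩
  refine (intervalIntegral.integral_mono_on_of_le_Ioo hle hGi hint hb).trans (le_of_eq ?_)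
  rw [intervalIntegral.integral_const_mul,
    intervalIntegral.integral_comp_mul_left (fun t : ℝ => t ^ (-δ)) (by positivity : (2 / Real.pi) ≠ 0)]
  have e : 2 / Real.pi * (Real.pi / 2) = 1 := by field_simp
  rw [e, mul_zero, integral_rpow (Or.inl (by linarith)), Real.zero_rpow (by linarith)]
  have : 1 - δ ≠ 0 := by linarith
  have e2 : -δ + 1 = 1 - δ := by ring
  rw [e2, Real.one_rpow, sub_zero, smul_eq_mul]
  field_simp

lemma aux_log (x δ : ℝ) (hx : 0 ≤ x) (hδ0 : 0 < δ) (hδ1 : δ < 1) :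
    Real.log (1 + x) ≤ x ^ δ / δ := by
  rw [le_div_iff₀ hδ0, mul_comm, ← Real.log_rpow (by linarith)]
  have h1 : (1 + x) ^ δ ≤ 1 + x ^ δ := by
    simpa using Real.rpow_add_le_add_rpow zero_le_one hx hδ0.le hδ1.le
  have h2 : 0 < (1 + x) ^ δ := by positivity
  have := Real.log_le_sub_one_of_pos h2
  linarith

lemma aux_pt (c w : ℂ) (δ r s : ℝ) (hδ0 : 0 < δ) (hδ1 : δ < 1) (hr : 0 < r) (hs : 0 < s)
    (hw : r * s ≤ ‖w‖) :
    logPlus ‖1 - c / w‖ ≤ (‖c‖ ^ δ / (δ * r ^ δ)) * s ^ (-δ) := by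
  have hrs : 0 < r * s := by positivity
  have hx : 0 ≤ ‖c‖ / (r * s) := by positivity
  have h1 : ‖1 - c / w‖ ≤ 1 + ‖c‖ / (r * s) := by
    refine (norm_sub_le _ _).trans ?_
    rw [norm_one, norm_div]
    gcongr
  have e : (‖c‖ ^ δ / (δ * r ^ δ)) * s ^ (-δ) = (‖c‖ / (r * s)) ^ δ / δ := by
    rw [Real.div_rpow (norm_nonneg _) hrs.le, Real.mul_rpow hr.le hs.le, Real.rpow_neg hs.le]
    field_simp
  rw [e]
  unfold logPlus
  refine max_le ?_ (by positivity)
  refine le_trans ?_ (aux_log _ δ hx hδ0 hδ1)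
  rcases (norm_nonneg (1 - c / w)).eq_or_lt with h | h
  · rw [← h, Real.log_zero]; exact Real.log_nonneg (by linarith)
  · exact Real.log_le_log h h1

lemma aux_geom (b : ℂ) (r t : ℝ) (hr : 0 < r) :
    r * |Real.sin t| ≤ ‖circ r (t + b.arg) - b‖ := by
  have e : circ r (t + b.arg) - b
      = Complex.exp (b.arg * Complex.I) * (circ r t - (‖b‖ : ℂ)) := by
    have h := Complex.norm_mul_exp_arg_mul_I b
    unfold circ
    push_cast
    rw [add_mul, Complex.exp_add, mul_sub]
    linear_combination h
  rw [e, norm_mul, Complex.norm_exp_ofReal_mul_I, one_mul]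
  have h2 := Complex.abs_im_le_norm (circ r t - (‖b‖ : ℂ))
  have h3 : (circ r t - (‖b‖ : ℂ)).im = r * Real.sin t := by
    unfold circ
    simp [Complex.exp_ofReal_mul_I_im]
  rw [h3, abs_mul, abs_of_pos hr] at h2
  exact h2

/-- For all `a, c ∈ ℂ`, `0 < δ < 1` and `r > 0`:
`(1/2π) ∫₀^{2π} log⁺|1 − c/(re^{iθ} + c − a)| dθ ≤ |c|^δ / (δ(1−δ) r^δ)`. -/
theorem circle_integral_logPlus_bound' (a c : ℂ) (δ r : ℝ) (hδ0 : 0 < δ) (hδ1 : δ < 1)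
    (hr : 0 < r) :
    (2 * Real.pi)⁻¹ * ∫ θ in (0:ℝ)..(2 * Real.pi), logPlus ‖1 - c / (circ r θ + c - a)‖ ≤
      ‖c‖ ^ δ / (δ * (1 - δ) * r ^ δ) := by
  have hpi := Real.pi_pos
  set b : ℂ := a - c with hbdef
  set K : ℝ := ‖c‖ ^ δ / (δ * r ^ δ) with hK
  set F : ℝ → ℝ := fun θ => logPlus ‖1 - c / (circ r θ + c - a)‖ with hF
  have hFm : Measurable F := by
    rw [hF]; unfold logPlus circ; fun_prop
  have hF0 : ∀ t, 0 ≤ F t := fun t => le_max_right _ _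
  have hper : Function.Periodic F (2 * Real.pi) := by
    intro θ
    simp only [hF]
    have : circ r (θ + 2 * Real.pi) = circ r θ := by
      unfold circ
      push_cast
      rw [add_mul, Complex.exp_add, Complex.exp_two_pi_mul_I, mul_one]
    rw [this]
  set G : ℝ → ℝ := fun t => F (t + b.arg) with hG
  have hGm : Measurable G := hFm.comp (measurable_id.add_const _)
  have hG0 : ∀ t, 0 ≤ G t := fun t => hF0 _
  have hGK : ∀ t s, 0 < s → s ≤ |Real.sin t| → G t ≤ K * s ^ (-δ) := by
    intro t s hs hst
    refine aux_pt c _ δ r s hδ0 hδ1 hr hs ?_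
    have := aux_geom b r t hr
    have e : circ r (t + b.arg) + c - a = circ r (t + b.arg) - b := by rw [hbdef]; ring
    rw [e]
    exact (mul_le_mul_of_nonneg_left hst hr.le).trans this
  have hsin : ∀ t ∈ Set.Ioo (0:ℝ) (Real.pi / 2), 0 < 2 / Real.pi * t ∧
      2 / Real.pi * t ≤ |Real.sin t| := by
    intro t ht
    have := ht.1
    exact ⟨by positivity, (Real.mul_le_sin ht.1.le ht.2.le).trans (le_abs_self _)⟩
  have key : ∀ f : ℝ → ℝ, Measurable f → (∀ t, |Real.sin (f t)| = |Real.sin t|) →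
      IntervalIntegrable (fun t => G (f t)) volume 0 (Real.pi / 2) ∧
      ∫ t in (0:ℝ)..(Real.pi / 2), G (f t) ≤ K * (Real.pi / 2 / (1 - δ)) := by
    intro f hf hfs
    refine aux_quarter _ (hGm.comp hf) K δ hδ1 (fun t => hG0 _) ?_
    intro t ht
    obtain ⟨h1, h2⟩ := hsin t ht
    exact hGK _ _ h1 (by rw [hfs]; exact h2)
  obtain ⟨i1, b1⟩ := key (fun t => t) measurable_id (fun t => rfl)
  obtain ⟨i2, b2⟩ := key (fun t => Real.pi - t) (by fun_prop) (fun t => by rw [Real.sin_pi_sub])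
  obtain ⟨i3, b3⟩ := key (fun t => Real.pi + t) (by fun_prop)
    (fun t => by rw [add_comm, Real.sin_add_pi, abs_neg])
  obtain ⟨i4, b4⟩ := key (fun t => 2 * Real.pi - t) (by fun_prop)
    (fun t => by rw [Real.sin_two_pi_sub, abs_neg])
  have j2 := i2.comp_sub_left Real.pi
  have j3 := i3.comp_sub_right Real.pi
  have j4 := i4.comp_sub_left (2 * Real.pi)
  simp only [sub_sub_cancel, add_sub_cancel, sub_zero, zero_add] at j2 j3 j4
  rw [intervalIntegral.integral_comp_sub_left (fun x => G x)] at b2 b4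
  rw [intervalIntegral.integral_comp_add_left (fun x => G x)] at b3
  have e1 : Real.pi - Real.pi / 2 = Real.pi / 2 := by ring
  have e2 : Real.pi / 2 + Real.pi = Real.pi + Real.pi / 2 := by ring
  have e3 : 2 * Real.pi - Real.pi / 2 = Real.pi + Real.pi / 2 := by ring
  rw [e1] at j2 b2
  rw [e2] at j3
  rw [e3] at j4 b4
  simp only [sub_zero, add_zero] at b2 b3 b4
  have hsum : ∫ t in (0:ℝ)..(2 * Real.pi), G t ≤ 4 * (K * (Real.pi / 2 / (1 - δ))) := by
    rw [← intervalIntegral.integral_add_adjacent_intervals (i1.trans (j2.symm.trans j3)) j4.symm,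
      ← intervalIntegral.integral_add_adjacent_intervals i1 (j2.symm.trans j3),
      ← intervalIntegral.integral_add_adjacent_intervals j2.symm j3]
    linarith
  have hshift : ∫ t in (0:ℝ)..(2 * Real.pi), G t = ∫ t in (0:ℝ)..(2 * Real.pi), F t := by
    rw [hG, intervalIntegral.integral_comp_add_right (fun x => F x)]
    have := hper.intervalIntegral_add_eq (b.arg) 0
    rw [zero_add] at this ⊢
    rw [add_comm, this]
  rw [← hshift]
  have h1δ : 0 < 1 - δ := by linarith
  have hrδ : 0 < r ^ δ := by positivity
  refine (mul_le_mul_of_nonneg_left hsum (by positivity)).trans (le_of_eq ?_)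
  rw [hK]
  field_simp
  try norm_num
end
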